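/- arXiv:2201.05642 — 3 statements merged into one kernel-verified Lean document; each statement's English description precedes it below -/
import Mathlib

section
/- Let p be a prime and let a, b be positive integers with k = max(a,b) and l = min(a,b). Then p^{l-1}((k-l)(p-1) + p + 1) ≥ (p-1)(a+b-2) + p + 1. -/
theorem stmt3_aux (q d m : ℕ) :
    q * (2 * m + d) + (q + 1) + 1 ≤ (q + 1) ^ m * (d * q + (q + 1) + 1) := by
  induction m with
  | zero => simp; linarith [mul_comm q d]
  | succ m ih =>
    have h2 : 2 ≤ (q + 1) ^ m * (d * q + (q + 1) + 1) := le_trans (by omega) ih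
    have h3 := Nat.mul_le_mul_left q h2
    rw [pow_succ]
    nlinarith

theorem stmt3 {p a b : ℕ} (hp : p.Prime) (ha : 1 ≤ a) (hb : 1 ≤ b) :
    p ^ (min a b - 1) * ((max a b - min a b) * (p - 1) + p + 1) ≥
      (p - 1) * (a + b - 2) + p + 1 := by
  have h := stmt3_aux (p - 1) (max a b - min a b) (min a b - 1)
  have h1 : p - 1 + 1 = p := Nat.sub_add_cancel hp.one_lt.le
  have h2 : 2 * (min a b - 1) + (max a b - min a b) = a + b - 2 := by omega
  rw [h1, h2] at h
  exact h
end

section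
/- Let G be a finite group and N a normal subgroup. Then the number of conjugacy classes of maximal cyclic subgroups of G is at least the number of conjugacy classes of maximal cyclic subgroups of G/N. -/
def IsMaximalCyclic {G : Type*} [Group G] (H : Subgroup G) : Prop :=
  IsCyclic H ∧ ∀ K : Subgroup G, IsCyclic K → H ≤ K → H = K

/-- The conjugacy class of a subgroup. -/
def conjClass {G : Type*} [Group G] (H : Subgroup G) : Set (Subgroup G) :=
  {K | ∃ g : G, K = H.map (MulAut.conj g).toMonoidHom}

/-- The number of conjugacy classes of maximal cyclic subgroups of `G`. -/
noncomputable def eta (G : Type*) [Group G] : ℕ :=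
  (conjClass '' {H : Subgroup G | IsMaximalCyclic H}).ncard

theorem exists_lift_maxCyclic {G : Type*} [Group G] [Finite G] (N : Subgroup G) [N.Normal]
    (M : Subgroup (G ⧸ N)) (hM : IsMaximalCyclic M) :
    ∃ C : Subgroup G, IsMaximalCyclic C ∧ C.map (QuotientGroup.mk' N) = M := by
  obtain ⟨hc, hmax⟩ := hM
  obtain ⟨y, hy⟩ := (Subgroup.isCyclic_iff_exists_zpowers_eq_top M).1 hc
  obtain ⟨x, rfl⟩ := QuotientGroup.mk'_surjective N y
  obtain ⟨C, hxC, hC⟩ := (Set.toFinite {K : Subgroup G | IsCyclic K}).exists_le_maximal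
    (a := Subgroup.zpowers x) (by simp only [Set.mem_setOf_eq]; infer_instance)
  have hCc : IsCyclic C := hC.1
  refine ⟨C, ⟨hCc, fun K hK h => le_antisymm h (hC.2 hK h)⟩, ?_⟩
  refine (hmax _ ?_ ?_).symm
  · exact isCyclic_of_surjective _ ((QuotientGroup.mk' N).subgroupMap_surjective C)
  · rw [← hy, ← MonoidHom.map_zpowers]
    exact Subgroup.map_mono hxC

theorem image_conjClass {G : Type*} [Group G] (N : Subgroup G) [N.Normal] (C : Subgroup G) :
    (Subgroup.map (QuotientGroup.mk' N)) '' conjClass C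
      = conjClass (C.map (QuotientGroup.mk' N)) := by
  have key : ∀ g : G, (C.map (MulAut.conj g).toMonoidHom).map (QuotientGroup.mk' N)
      = (C.map (QuotientGroup.mk' N)).map
        (MulAut.conj (QuotientGroup.mk' N g)).toMonoidHom := by
    intro g
    rw [Subgroup.map_map, Subgroup.map_map]
    congr 1
  ext K
  constructor
  · rintro ⟨_, ⟨g, rfl⟩, rfl⟩
    exact ⟨_, key g⟩
  · rintro ⟨y, rfl⟩
    obtain ⟨g, rfl⟩ := QuotientGroup.mk'_surjective N y
    exact ⟨_, ⟨g, rfl⟩, key g⟩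

theorem stmt12 {G : Type*} [Group G] [Finite G] (N : Subgroup G) [N.Normal] :
    eta G ≥ eta (G ⧸ N) := by
  unfold eta
  refine le_trans (Set.ncard_le_ncard (t := (fun S => (Subgroup.map (QuotientGroup.mk' N)) '' S) ''
    (conjClass '' {H : Subgroup G | IsMaximalCyclic H})) ?_ (Set.toFinite _))
    (Set.ncard_image_le (Set.toFinite _))
  rintro _ ⟨M, hM, rfl⟩
  obtain ⟨C, hC, rfl⟩ := exists_lift_maxCyclic N M hM
  exact ⟨_, ⟨C, hC, rfl⟩, image_conjClass N C⟩
end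

section
/- Let G be a noncyclic finite p-group of nilpotence class l ≥ 1 and order p^n. Then the number of conjugacy classes of maximal cyclic subgroups of G is at least (p-1)(n/l - 2) + p + 1. -/
open Subgroup

/-- Every cyclic subgroup lies in a maximal cyclic subgroup. -/
lemma exists_maxCyclic {G : Type*} [Group G] [Finite G] (H : Subgroup G) (hH : IsCyclic H) :
    ∃ M : Subgroup G, IsMaximalCyclic M ∧ H ≤ M := by
  obtain ⟨M, hHM, hM⟩ := (Set.toFinite {K : Subgroup G | IsCyclic K}).exists_le_maximal
    (a := H) hH
  exact ⟨M, ⟨hM.1, fun K hK h => le_antisymm h (hM.2 hK h)⟩, hHM⟩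

lemma isCyclic_map' {G H : Type*} [Group G] [Group H] (f : G →* H) (K : Subgroup G)
    (hK : IsCyclic K) : IsCyclic (K.map f) := by
  exact isCyclic_of_surjective (f.subgroupMap K) (f.subgroupMap_surjective K)

/-- Maximal cyclic subgroups of a quotient lift. -/
lemma exists_lift_maxCyclic_s14 {G H : Type*} [Group G] [Group H] [Finite G] (f : G →* H)
    (hf : Function.Surjective f) (M : Subgroup H) (hM : IsMaximalCyclic M) :
    ∃ K : Subgroup G, IsMaximalCyclic K ∧ K.map f = M := by
  obtain ⟨y, hy⟩ := (Subgroup.isCyclic_iff_exists_zpowers_eq_top M).1 hM.1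
  obtain ⟨x, rfl⟩ := hf y
  obtain ⟨K, hK, hxK⟩ := exists_maxCyclic (zpowers x) inferInstance
  refine ⟨K, hK, (hM.2 _ (isCyclic_map' f K hK.1) ?_).symm⟩
  rw [← hy, ← MonoidHom.map_zpowers]
  exact Subgroup.map_mono hxK

/-- A finite abelian `p`-group with at most `p` solutions of `x ^ p = 1` is cyclic. -/
lemma cyclic_of_ker_le {p : ℕ} (hp : p.Prime) : ∀ (n : ℕ) (A : Type*) [CommGroup A] [Finite A],
    Nat.card A = p ^ n → Nat.card (powMonoidHom p : A →* A).ker ≤ p → IsCyclic A := by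
  intro n
  induction n using Nat.strong_induction_on with
  | _ n ih =>
  intro A _ _ hA hk
  have : Fact p.Prime := ⟨hp⟩
  rcases Nat.eq_zero_or_pos n with rfl | hn
  · have : Subsingleton A := (Nat.card_eq_one_iff_unique.1 (by simpa using hA)).1
    infer_instance
  have hPG : IsPGroup p A := IsPGroup.of_card hA
  have hmul : Nat.card (powMonoidHom p : A →* A).ker * Nat.card (powMonoidHom p : A →* A).range
      = p ^ n := by
    rw [← hA, ← Subgroup.index_ker, Subgroup.card_mul_index]
  obtain ⟨m, hm⟩ := (IsPGroup.iff_card.1 (hPG.to_subgroup (powMonoidHom p : A →* A).ker))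
  obtain ⟨k, hkr⟩ := (IsPGroup.iff_card.1 (hPG.to_subgroup (powMonoidHom p : A →* A).range))
  have hm1 : m ≤ 1 := by
    rw [hm] at hk
    exact (Nat.pow_le_pow_iff_right hp.one_lt).1 (by simpa using hk)
  have hmk : m + k = n := by
    rw [hm, hkr, ← pow_add] at hmul
    exact Nat.pow_right_injective hp.two_le hmul
  have hm0 : m ≠ 0 := by
    rintro rfl
    obtain ⟨x, hx⟩ := exists_prime_orderOf_dvd_card' (G := A) p
      (by rw [hA]; exact dvd_pow_self _ (by omega))
    have hb : (powMonoidHom p : A →* A).ker = ⊥ := by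
      rw [← Subgroup.card_eq_one, hm, pow_zero]
    have : x ∈ (powMonoidHom p : A →* A).ker := by
      rw [MonoidHom.mem_ker, powMonoidHom_apply, ← hx, pow_orderOf_eq_one]
    rw [hb, Subgroup.mem_bot] at this
    subst this
    rw [orderOf_one] at hx
    exact hp.one_lt.ne hx
  have hcyc : IsCyclic (powMonoidHom p : A →* A).range := by
    refine ih k (by omega) _ hkr ?_
    refine le_trans ?_ hk
    refine Nat.card_le_card_of_injective
      (fun x => (⟨x.1.1, ?_⟩ : (powMonoidHom p : A →* A).ker)) ?_
    · have := x.2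
      rw [MonoidHom.mem_ker, powMonoidHom_apply] at this ⊢
      exact_mod_cast congrArg Subtype.val this
    · intro x y hxy
      have h := congrArg (fun z : (powMonoidHom p : A →* A).ker => (z : A)) hxy
      exact Subtype.ext (Subtype.ext h)
  obtain ⟨y, hy⟩ := (Subgroup.isCyclic_iff_exists_zpowers_eq_top _).1 hcyc
  have hyr : y ∈ (powMonoidHom p : A →* A).range := by rw [← hy]; exact mem_zpowers y
  obtain ⟨x, hx⟩ := hyr
  rw [powMonoidHom_apply] at hx
  have hoy : orderOf y = p ^ k := by rw [← Nat.card_zpowers, hy, hkr]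
  rcases Nat.eq_zero_or_pos k with rfl | hk0
  · refine isCyclic_of_prime_card (p := p) ?_
    rw [hA]; have : n = 1 := by omega
    rw [this, pow_one]
  · refine isCyclic_of_orderOf_eq_card x ?_
    rw [hA]
    have hn1 : n = k + 1 := by omega
    rw [hn1]
    refine orderOf_eq_prime_pow ?_ ?_
    · intro h
      obtain ⟨j, rfl⟩ : ∃ j, k = j + 1 := ⟨k - 1, by omega⟩
      rw [pow_succ', pow_mul, hx] at h
      have := orderOf_dvd_of_pow_eq_one h
      rw [hoy] at this
      have := (Nat.pow_dvd_pow_iff_le_right hp.one_lt).1 this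
      omega
    · rw [pow_succ', pow_mul, hx, ← hoy, pow_orderOf_eq_one]

/-- Existence of a subgroup of order `p` with noncyclic quotient. -/
lemma exists_good_N {p k : ℕ} (hp : p.Prime) (A : Type*) [CommGroup A] [Finite A]
    (hA : Nat.card A = p ^ (k + 3)) (hnc : ¬ IsCyclic A) :
    ∃ N : Subgroup A, Nat.card N = p ∧ ¬ IsCyclic (A ⧸ N) := by
  have : Fact p.Prime := ⟨hp⟩
  by_cases hpow : ∀ x : A, x ^ p = 1
  · obtain ⟨x, hx⟩ := exists_prime_orderOf_dvd_card' (G := A) p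
      (by rw [hA]; exact dvd_pow_self _ (by omega))
    refine ⟨zpowers x, by rw [Nat.card_zpowers, hx], fun hc => ?_⟩
    obtain ⟨g, hg⟩ := (isCyclic_iff_exists_orderOf_eq_natCard).1 hc
    have h1 : orderOf g ∣ p := by
      obtain ⟨a, rfl⟩ := QuotientGroup.mk_surjective g
      refine orderOf_dvd_of_pow_eq_one ?_
      rw [← QuotientGroup.mk_pow, hpow, QuotientGroup.mk_one]
    have h2 := Subgroup.card_eq_card_quotient_mul_card_subgroup (zpowers x)
    rw [hA, Nat.card_zpowers, hx, ← hg, pow_succ] at h2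
    have h3 := Nat.eq_of_mul_eq_mul_right hp.pos h2
    have h4 := Nat.le_of_dvd hp.pos h1
    rw [← h3] at h4
    have : p ^ 1 < p ^ (k + 2) := Nat.pow_lt_pow_right hp.one_lt (by omega)
    rw [pow_one] at this
    omega
  · push Not at hpow
    obtain ⟨a, ha⟩ := hpow
    have hPG : IsPGroup p A := IsPGroup.of_card hA
    obtain ⟨m, hm⟩ := IsPGroup.iff_card.1 (hPG.to_subgroup (powMonoidHom p : A →* A).range)
    have hm0 : m ≠ 0 := by
      rintro rfl
      rw [pow_zero, Subgroup.card_eq_one] at hm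
      have : a ^ p ∈ (powMonoidHom p : A →* A).range := ⟨a, rfl⟩
      rw [hm, Subgroup.mem_bot] at this
      exact ha this
    obtain ⟨⟨x, hxr⟩, hx⟩ := exists_prime_orderOf_dvd_card' (G := (powMonoidHom p : A →* A).range) p
      (by rw [hm]; exact dvd_pow_self _ hm0)
    rw [Subgroup.orderOf_mk] at hx
    refine ⟨zpowers x, by rw [Nat.card_zpowers, hx], fun hc => hnc ?_⟩
    obtain ⟨g, hg⟩ := hc.exists_generator
    obtain ⟨b, rfl⟩ := QuotientGroup.mk_surjective g
    have key : ∀ c : A, ∃ i : ℤ, ∃ j : ℤ, c = b ^ i * x ^ j := by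
      intro c
      obtain ⟨i, hi⟩ := mem_zpowers_iff.1 (hg (c : A ⧸ zpowers x))
      rw [← QuotientGroup.mk_zpow, QuotientGroup.eq] at hi
      obtain ⟨j, hj⟩ := mem_zpowers_iff.1 hi
      exact ⟨i, j, by rw [hj]; group⟩
    obtain ⟨c, hc⟩ := hxr
    rw [powMonoidHom_apply] at hc
    obtain ⟨i, j, rfl⟩ := key c
    have hxb : x ∈ zpowers b := by
      rw [← hc, mul_pow, ← zpow_natCast (x ^ j), ← zpow_mul, mul_comm j, zpow_mul, zpow_natCast,
        ← hx, pow_orderOf_eq_one, one_zpow, mul_one]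
      exact pow_mem (zpow_mem (mem_zpowers b) _) _
    refine ⟨b, fun c => ?_⟩
    obtain ⟨i, j, rfl⟩ := key c
    exact mul_mem (zpow_mem (mem_zpowers b) _) (zpow_mem hxb _)

/-- In a cyclic group, elements killed by `p` lie in the subgroup of order `p`. -/
lemma mem_of_cyclic {p : ℕ} (hp : p.Prime) {A : Type*} [CommGroup A] [Finite A] (K N : Subgroup A)
    (hK : IsCyclic K) (hN : Nat.card N = p) (hNK : N ≤ K) (h : A) (hhK : h ∈ K) (hh : h ^ p = 1) :
    h ∈ N := by
  have h1 : N.subgroupOf K ≤ (powMonoidHom p : K →* K).ker := by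
    intro x hx
    rw [MonoidHom.mem_ker, powMonoidHom_apply]
    rw [mem_subgroupOf] at hx
    refine Subtype.ext ?_
    have := pow_card_eq_one' (x := (⟨x.1, hx⟩ : N))
    rw [hN] at this
    simpa using congrArg Subtype.val this
  have h2 : Nat.card (powMonoidHom p : K →* K).ker ≤ Nat.card (N.subgroupOf K) := by
    rw [IsCyclic.card_powMonoidHom_ker, Nat.card_congr (subgroupOfEquivOfLe hNK).toEquiv, hN]
    exact Nat.gcd_le_right _ hp.pos
  have h3 := Subgroup.eq_of_le_of_card_ge h1 h2
  have h4 : (⟨h, hhK⟩ : K) ∈ (powMonoidHom p : K →* K).ker := by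
    rw [MonoidHom.mem_ker, powMonoidHom_apply]
    exact Subtype.ext (by simpa using hh)
  rw [← h3, mem_subgroupOf] at h4
  exact h4

/-- Key inductive step: dividing out a subgroup of order `p` drops the count by `p - 1`. -/
lemma ab_step {p : ℕ} (hp : p.Prime) (A : Type*) [CommGroup A] [Finite A] (N : Subgroup A)
    (hN : Nat.card N = p) (h : A) (hh : h ^ p = 1) (hhN : h ∉ N) :
    {H : Subgroup (A ⧸ N) | IsMaximalCyclic H}.ncard + (p - 1)
      ≤ {H : Subgroup A | IsMaximalCyclic H}.ncard := by
  classical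
  let π : A →* A ⧸ N := QuotientGroup.mk' N
  have hπ : Function.Surjective π := QuotientGroup.mk'_surjective N
  obtain ⟨M0, hM0, hhM⟩ := exists_maxCyclic (zpowers (π h)) inferInstance
  have hhM0 : π h ∈ M0 := hhM (mem_zpowers _)
  have hinf : ∀ K : Subgroup A, IsCyclic K → K.map π = M0 → K ⊓ N = ⊥ := by
    intro K hK hKM
    have hNK : ¬ N ≤ K := by
      intro hNK
      apply hhN
      refine mem_of_cyclic hp K N hK hN hNK h ?_ hh
      rw [← hKM] at hhM0
      obtain ⟨k, hk, hkh⟩ := hhM0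
      have : k⁻¹ * h ∈ N := QuotientGroup.eq.1 hkh
      have := mul_mem hk (hNK this)
      simpa using this
    have hd : Nat.card (K ⊓ N : Subgroup A) ∣ p := by
      rw [← hN]; exact Subgroup.card_dvd_of_le inf_le_right
    rcases (Nat.dvd_prime hp).1 hd with h1 | h1
    · exact Subgroup.card_eq_one.1 h1
    · exfalso
      have := Subgroup.eq_of_le_of_card_ge (inf_le_right : K ⊓ N ≤ N) (by rw [h1, hN])
      exact hNK (this ▸ inf_le_left)
  have hcard : ∀ K : Subgroup A, IsCyclic K → K.map π = M0 → Nat.card K = Nat.card M0 := by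
    intro K hK hKM
    rw [← hKM]
    have hinj : Function.Injective (π.subgroupMap K) := by
      rw [← MonoidHom.ker_eq_bot_iff, eq_bot_iff]
      intro x hx
      have h1 : π x.1 = 1 := by
        have := MonoidHom.mem_ker.1 hx
        exact congrArg Subtype.val this
      have h2 : x.1 ∈ N := (QuotientGroup.eq_one_iff _).1 h1
      have h3 : x.1 ∈ K ⊓ N := ⟨x.2, h2⟩
      rw [hinf K hK hKM, Subgroup.mem_bot] at h3
      rw [Subgroup.mem_bot]
      exact Subtype.ext h3
    exact Nat.card_congr (Equiv.ofBijective _ ⟨hinj, π.subgroupMap_surjective K⟩)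
  have hmax : ∀ K : Subgroup A, IsCyclic K → K.map π = M0 → IsMaximalCyclic K := by
    intro K hK hKM
    refine ⟨hK, fun K' hK' hle => ?_⟩
    have hK'M : K'.map π = M0 :=
      (hM0.2 _ (isCyclic_map' π K' hK') (hKM ▸ Subgroup.map_mono hle)).symm
    exact Subgroup.eq_of_le_of_card_ge hle (by rw [hcard K hK hKM, hcard K' hK' hK'M])
  obtain ⟨y, hy⟩ := (Subgroup.isCyclic_iff_exists_zpowers_eq_top M0).1 hM0.1
  obtain ⟨g, rfl⟩ := hπ y
  have hmapz : ∀ z ∈ N, (zpowers (g * z)).map π = M0 := by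
    intro z hz
    rw [MonoidHom.map_zpowers, map_mul, (QuotientGroup.eq_one_iff z).2 hz |> fun h => (h : π z = 1),
      mul_one, hy]
  let T : Set (Subgroup A) := Set.range fun z : N => zpowers (g * z.1)
  have hT : T.ncard = p := by
    rw [Set.ncard_range_of_injective, hN]
    intro z w hzw
    have h1 := hinf _ inferInstance (hmapz z.1 z.2)
    have h2 : g * w.1 ∈ zpowers (g * z.1) := by
      have : zpowers (g * z.1) = zpowers (g * w.1) := hzw
      rw [this]; exact mem_zpowers _
    have h3 : (g * z.1)⁻¹ * (g * w.1) ∈ zpowers (g * z.1) ⊓ N := by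
      refine ⟨Subgroup.mul_mem _ (Subgroup.inv_mem _ (mem_zpowers _)) h2, ?_⟩
      have : (g * z.1)⁻¹ * (g * w.1) = z.1⁻¹ * w.1 := by group
      rw [this]
      exact Subgroup.mul_mem _ (Subgroup.inv_mem _ z.2) w.2
    rw [h1, Subgroup.mem_bot, inv_mul_eq_one] at h3
    exact Subtype.ext (mul_left_cancel h3)
  have hex := fun M : Subgroup (A ⧸ N) => fun hM : IsMaximalCyclic M =>
    exists_lift_maxCyclic_s14 π hπ M hM
  choose! s hs1 hs2 using hex
  let S : Set (Subgroup (A ⧸ N)) := {H | IsMaximalCyclic H} \ {M0}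
  have hSc : S.ncard + 1 = {H : Subgroup (A ⧸ N) | IsMaximalCyclic H}.ncard :=
    Set.ncard_sdiff_singleton_add_one hM0
  have hsS : (s '' S).ncard = S.ncard := by
    refine Set.InjOn.ncard_image ?_
    intro a ha b hb hab
    rw [← hs2 a ha.1, ← hs2 b hb.1, hab]
  have hdis : Disjoint (s '' S) T := by
    rw [Set.disjoint_left]
    rintro _ ⟨a, ha, rfl⟩ ⟨z, hz⟩
    apply ha.2
    have h1 : zpowers (g * z.1) = s a := hz
    rw [Set.mem_singleton_iff, ← hs2 a ha.1, ← h1, hmapz z.1 z.2]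
  have hsub : s '' S ∪ T ⊆ {H : Subgroup A | IsMaximalCyclic H} := by
    rintro _ (⟨a, ha, rfl⟩ | ⟨z, rfl⟩)
    · exact hs1 a ha.1
    · exact hmax _ inferInstance (hmapz z.1 z.2)
  have hle := Set.ncard_le_ncard hsub (Set.toFinite _)
  rw [Set.ncard_union_eq hdis (Set.toFinite _) (Set.toFinite _), hsS, hT] at hle
  have := hp.two_le
  omega

/-- Base case: noncyclic of order `p ^ 2`. -/
lemma ab_base {p : ℕ} (hp : p.Prime) (A : Type*) [CommGroup A] [Finite A]
    (hA : Nat.card A = p ^ 2) (hnc : ¬ IsCyclic A) :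
    p + 1 ≤ {H : Subgroup A | IsMaximalCyclic H}.ncard := by
  classical
  have hfin : {H : Subgroup A | IsMaximalCyclic H}.Finite := Set.toFinite _
  have hcardM : ∀ M : Subgroup A, IsMaximalCyclic M → Nat.card M ≤ p := by
    intro M hM
    have hd : Nat.card M ∣ p ^ 2 := hA ▸ Subgroup.card_subgroup_dvd_card M
    obtain ⟨i, hi, hMi⟩ := (Nat.dvd_prime_pow hp).1 hd
    have hi2 : i ≠ 2 := by
      rintro rfl
      have : M = ⊤ := Subgroup.eq_top_of_card_eq M (by rw [hMi, hA])
      subst this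
      have := hM.1
      exact hnc (isCyclic_of_surjective (Subgroup.topEquiv (G := A)) Subgroup.topEquiv.surjective)
    rw [hMi]
    calc p ^ i ≤ p ^ 1 := Nat.pow_le_pow_right hp.pos (by omega)
      _ = p := pow_one p
  have hcover : (Set.univ \ {1} : Set A) ⊆ ⋃ M ∈ hfin.toFinset, ((M : Set A) \ {1}) := by
    intro x hx
    obtain ⟨M, hM, hxM⟩ := exists_maxCyclic (zpowers x) inferInstance
    simp only [Set.mem_iUnion]
    exact ⟨M, by simpa using hM, hxM (mem_zpowers x), hx.2⟩
  have h1 : (Set.univ \ {1} : Set A).ncard + 1 = p ^ 2 := by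
    rw [Set.ncard_sdiff_singleton_add_one (Set.mem_univ _), Set.ncard_univ, hA]
  have h2 := Set.ncard_le_ncard hcover (Set.toFinite _)
  have h3 : (⋃ M ∈ hfin.toFinset, ((M : Set A) \ {1})).ncard ≤
      ∑ M ∈ hfin.toFinset, ((M : Set A) \ {1}).ncard := Finset.set_ncard_biUnion_le _ _
  have h4 : ∑ M ∈ hfin.toFinset, ((M : Set A) \ {1}).ncard ≤
      ∑ M ∈ hfin.toFinset, (p - 1) := by
    refine Finset.sum_le_sum fun M hM => ?_
    have hM' : IsMaximalCyclic M := by simpa using hM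
    have h5 : ((M : Set A) \ {1}).ncard + 1 = (M : Set A).ncard :=
      Set.ncard_sdiff_singleton_add_one M.one_mem
    have h6 : (M : Set A).ncard = Nat.card M := rfl
    have := hcardM M hM'
    omega
  rw [Finset.sum_const, ← Set.ncard_eq_toFinset_card _ hfin, smul_eq_mul] at h4
  have h7 : p ^ 2 ≤ {H : Subgroup A | IsMaximalCyclic H}.ncard * (p - 1) + 1 := by omega
  by_contra hcon
  have h8 : {H : Subgroup A | IsMaximalCyclic H}.ncard ≤ p := by omega
  have h9 := Nat.mul_le_mul_right (p - 1) h8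
  obtain ⟨q, rfl⟩ : ∃ q, p = q + 2 := ⟨p - 2, by have := hp.two_le; omega⟩
  have h10 : q + 2 - 1 = q + 1 := rfl
  rw [h10] at h9 h7
  nlinarith

lemma ab_main {p : ℕ} (hp : p.Prime) : ∀ (k : ℕ) (A : Type*) [CommGroup A] [Finite A],
    Nat.card A = p ^ (k + 2) → ¬ IsCyclic A →
    (p - 1) * k + p + 1 ≤ {H : Subgroup A | IsMaximalCyclic H}.ncard := by
  intro k
  induction k with
  | zero =>
    intro A _ _ hA hnc
    simpa using ab_base hp A hA hnc
  | succ k ih =>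
    intro A _ _ hA hnc
    obtain ⟨N, hN, hNc⟩ := exists_good_N hp A hA hnc
    have hq : Nat.card (A ⧸ N) = p ^ (k + 2) := by
      have h2 := Subgroup.card_eq_card_quotient_mul_card_subgroup N
      rw [hA, hN, show k + 1 + 2 = (k + 2) + 1 by ring, pow_succ] at h2
      exact (Nat.eq_of_mul_eq_mul_right hp.pos h2).symm
    have h1 := ih (A ⧸ N) hq hNc
    obtain ⟨h, hh, hhN⟩ : ∃ h : A, h ^ p = 1 ∧ h ∉ N := by
      by_contra hcon
      push Not at hcon
      refine hnc (cyclic_of_ker_le hp _ A hA ?_)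
      exact (Subgroup.card_le_of_le (fun x hx => hcon x hx)).trans_eq hN
    have h2 := ab_step hp A N hN h hh hhN
    rw [mul_add, mul_one]
    omega

/-- Real-valued version for commutative groups. -/
lemma ab_real {p m : ℕ} (hp : p.Prime) (A : Type*) [Group A] [Finite A]
    (hcomm : ∀ a b : A, a * b = b * a)
    (hA : Nat.card A = p ^ m) (hnc : ¬ IsCyclic A) :
    ((p : ℝ) - 1) * ((m : ℝ) - 2) + p + 1 ≤ ({H : Subgroup A | IsMaximalCyclic H}.ncard : ℝ) := by
  let _ : CommGroup A := { ‹Group A› with mul_comm := hcomm }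
  have : Fact p.Prime := ⟨hp⟩
  have hm : 2 ≤ m := by
    by_contra hcon
    apply hnc
    refine isCyclic_of_card_dvd_prime (p := p) ?_
    rw [hA]
    exact (pow_dvd_pow p (by omega : m ≤ 1)).trans (by rw [pow_one])
  obtain ⟨k, rfl⟩ : ∃ k, m = k + 2 := ⟨m - 2, by omega⟩
  have h := ab_main hp k A hA hnc
  have h' : (((p - 1) * k + p + 1 : ℕ) : ℝ) ≤ _ := Nat.cast_le.2 h
  rw [Nat.cast_add, Nat.cast_add, Nat.cast_mul, Nat.cast_sub hp.one_le] at h'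
  push_cast at h' ⊢
  linarith

open scoped commutatorElement

lemma map_conj_map {G H : Type*} [Group G] [Group H] (f : G →* H) (K : Subgroup G) (g : G) :
    (K.map (MulAut.conj g).toMonoidHom).map f = (K.map f).map (MulAut.conj (f g)).toMonoidHom := by
  rw [Subgroup.map_map, Subgroup.map_map]
  congr 1
  ext x
  simp

/-- `eta` does not increase when passing to quotients. -/
lemma eta_quot {G H : Type*} [Group G] [Group H] [Finite G] (f : G →* H)
    (hf : Function.Surjective f) : eta H ≤ eta G := by
  have : Finite H := Finite.of_surjective f hf
  let Φ : Set (Subgroup G) → Set (Subgroup H) := fun S => (Subgroup.map f) '' S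
  have hΦ : ∀ K : Subgroup G, Φ (conjClass K) = conjClass (K.map f) := by
    intro K
    ext L
    constructor
    · rintro ⟨_, ⟨g, rfl⟩, rfl⟩
      exact ⟨f g, map_conj_map f K g⟩
    · rintro ⟨h, rfl⟩
      obtain ⟨g, rfl⟩ := hf h
      exact ⟨_, ⟨g, rfl⟩, map_conj_map f K g⟩
  have hsub : conjClass '' {L : Subgroup H | IsMaximalCyclic L} ⊆
      Φ '' (conjClass '' {K : Subgroup G | IsMaximalCyclic K}) := by
    rintro _ ⟨L, hL, rfl⟩
    obtain ⟨K, hK, rfl⟩ := exists_lift_maxCyclic_s14 f hf L hL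
    exact ⟨_, ⟨K, hK, rfl⟩, hΦ K⟩
  exact (Set.ncard_le_ncard hsub (Set.toFinite _)).trans (Set.ncard_image_le (Set.toFinite _))

/-- `eta` is at least the number of maximal cyclic subgroups of a central subgroup. -/
lemma eta_center {G : Type*} [Group G] [Finite G] (Z : Subgroup G) (hZ : Z ≤ center G) :
    {H : Subgroup Z | IsMaximalCyclic H}.ncard ≤ eta G := by
  have hex : ∀ M : Subgroup Z, IsMaximalCyclic M →
      ∃ C : Subgroup G, IsMaximalCyclic C ∧ M.map Z.subtype ≤ C := fun M hM =>
    exists_maxCyclic _ (isCyclic_map' Z.subtype M hM.1)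
  choose! c hc1 hc2 using hex
  have hrec : ∀ M : Subgroup Z, IsMaximalCyclic M → (c M).subgroupOf Z = M := by
    intro M hM
    refine (hM.2 _ ?_ ?_).symm
    · have := (hc1 M hM).1
      refine isCyclic_of_injective
        ((Z.subtype.comp ((c M).subgroupOf Z).subtype).codRestrict (c M) fun x => x.2) ?_
      intro x y hxy
      have := congrArg (fun z : (c M) => (z : G)) hxy
      exact Subtype.ext (Subtype.ext this)
    · rw [← Subgroup.comap_subtype, ← Subgroup.map_le_iff_le_comap]
      exact hc2 M hM
  have hconj : ∀ C : Subgroup G, ∀ g : G,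
      (C.map (MulAut.conj g).toMonoidHom).subgroupOf Z = C.subgroupOf Z := by
    intro C g
    ext ⟨z, hz⟩
    have hzc : ∀ w : G, g * w * g⁻¹ = z ↔ w = z := by
      intro w
      have := Subgroup.mem_center_iff.1 (hZ hz) g
      constructor
      · intro h
        have : w = g⁻¹ * z * g := by rw [← h]; group
        rw [this, mul_assoc, ← Subgroup.mem_center_iff.1 (hZ hz) g]; group
      · rintro rfl
        rw [this]; group
    rw [mem_subgroupOf, mem_subgroupOf]
    constructor
    · rintro ⟨w, hw, hwz⟩
      have := (hzc w).1 (by simpa using hwz)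
      exact this ▸ hw
    · intro h
      exact ⟨z, h, by simpa using (hzc z).2 rfl⟩
  refine Set.ncard_le_ncard_of_injOn (fun M => conjClass (c M)) ?_ ?_ (Set.toFinite _)
  · intro M hM
    exact ⟨c M, hc1 M hM, rfl⟩
  · intro M hM M' hM' h
    have h1 : c M ∈ conjClass (c M) := ⟨1, by
      ext x; simp⟩
    have h : conjClass (c M) = conjClass (c M') := h
    rw [h] at h1
    obtain ⟨g, hg⟩ := h1
    rw [← hrec M hM, ← hrec M' hM', hg, hconj]

abbrev lcs (G : Type*) [Group G] (i : ℕ) : Subgroup G := (⊤ : Subgroup G).lowerCentralSeries i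

/-- The image of `γ_i` in `G / γ_{i+1}`. -/
abbrev lcsZ (G : Type*) [Group G] (i : ℕ) : Subgroup (G ⧸ lcs G (i + 1)) :=
  (lcs G i).map (QuotientGroup.mk' (lcs G (i + 1)))

lemma lcs_comm {G : Type*} [Group G] (i : ℕ) (x g : G) (hx : x ∈ lcs G i) :
    ⁅x, g⁆ ∈ lcs G (i + 1) :=
  Subgroup.commutator_mem_commutator hx (Subgroup.mem_top g)

lemma lcsZ_central {G : Type*} [Group G] (i : ℕ) : lcsZ G i ≤ center (G ⧸ lcs G (i + 1)) := by
  rintro _ ⟨x, hx, rfl⟩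
  rw [Subgroup.mem_center_iff]
  intro q
  obtain ⟨g, rfl⟩ := QuotientGroup.mk'_surjective _ q
  have h : QuotientGroup.mk' (lcs G (i + 1)) ⁅x, g⁆ = 1 :=
    (QuotientGroup.eq_one_iff _).2 (lcs_comm i x g hx)
  rw [map_commutatorElement, commutatorElement_eq_one_iff_mul_comm] at h
  exact h.symm

lemma lcsZ_card {G : Type*} [Group G] [Finite G] (i : ℕ) :
    Nat.card (lcsZ G i) * Nat.card (lcs G (i + 1)) = Nat.card (lcs G i) := by
  have hle : lcs G (i + 1) ≤ lcs G i := Subgroup.lowerCentralSeries_antitone _ (Nat.le_succ i)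
  have h1 := Subgroup.card_mul_index
    ((QuotientGroup.mk' (lcs G (i + 1))).subgroupMap (lcs G i)).ker
  rw [Subgroup.index_ker, MonoidHom.range_eq_top.2 (MonoidHom.subgroupMap_surjective _ _),
    Subgroup.card_top] at h1
  rw [← h1, mul_comm]
  congr 1
  rw [← Nat.card_congr (subgroupOfEquivOfLe hle).toEquiv]
  congr 2
  ext x
  rw [mem_subgroupOf, MonoidHom.mem_ker, ← QuotientGroup.eq_one_iff]
  exact ⟨fun h => Subtype.ext h, fun h => congrArg Subtype.val h⟩

/-- Exponents of lower central factors divide the order of the abelianization. -/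
lemma lcs_pow {G : Type*} [Group G] (E : ℕ) (h0 : ∀ x : G, x ^ E ∈ lcs G 1) :
    ∀ i, ∀ x ∈ lcs G i, x ^ E ∈ lcs G (i + 1) := by
  intro i
  induction i with
  | zero => exact fun x _ => h0 x
  | succ i ih =>
    intro x hx
    let π := QuotientGroup.mk' (lcs G (i + 2))
    have hcen : ∀ y ∈ lcs G (i + 1), ∀ q, π y * q = q * π y := by
      intro y hy q
      exact (Subgroup.mem_center_iff.1 (lcsZ_central (i + 1) ⟨y, hy, rfl⟩) q).symm
    suffices h : π x ^ E = 1 by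
      rw [← map_pow] at h
      exact (QuotientGroup.eq_one_iff _).1 h
    have hx' : x ∈ closure { x | ∃ p ∈ lcs G i, ∃ q ∈ (⊤ : Subgroup G), ⁅p, q⁆ = x } := hx
    induction hx' using Subgroup.closure_induction with
    | mem y hy =>
      obtain ⟨a, ha, g, -, rfl⟩ := hy
      have hc := hcen _ (lcs_comm i a g ha)
      have hcomm : ∀ n : ℕ, π ⁅a, g⁆ ^ n = ⁅π a ^ n, π g⁆ := by
        intro n
        induction n with
        | zero => rw [pow_zero, pow_zero, commutatorElement_one_left]
        | succ n ihn =>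
          rw [pow_succ, ihn, pow_succ]
          have h1 : π a * π g = π ⁅a, g⁆ * π g * π a := by
            rw [map_commutatorElement, commutatorElement_def]; group
          have h2 : ⁅π a ^ n * π a, π g⁆ = π a ^ n * (π a * π g) * (π a)⁻¹ * (π a ^ n)⁻¹ * (π g)⁻¹ := by
            rw [commutatorElement_def]; group
          rw [h2, h1, commutatorElement_def, ← hc]
          have h3 : π a ^ n * (π ⁅a, g⁆ * π g * π a) = π ⁅a, g⁆ * (π a ^ n * π g * π a) := by
            rw [← mul_assoc, ← mul_assoc, ← hc (π a ^ n)]; group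
          rw [h3]; group
      rw [hcomm, ← map_pow, ← map_commutatorElement]
      exact (QuotientGroup.eq_one_iff _).2 (lcs_comm (i + 1) _ g (ih a ha))
    | one => rw [map_one, one_pow]
    | mul y z hy hz h1 h2 =>
      rw [map_mul, (show Commute (π y) (π z) from hcen y hy _).mul_pow, h1 hy, h2 hz, one_mul]
    | inv y hy h1 => rw [map_inv, inv_pow, h1 (by exact hy), inv_one]

/-- A nilpotent group with cyclic abelianization is cyclic. -/
lemma cyclic_of_lcsZ {G : Type*} [Group G] [Group.IsNilpotent G] (h : IsCyclic (lcsZ G 0)) :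
    IsCyclic G := by
  let f : G →* lcsZ G 0 :=
    (QuotientGroup.mk' (lcs G 1)).codRestrict _ fun x => ⟨x, Subgroup.mem_top x, rfl⟩
  have hker : f.ker = lcs G 1 := by
    ext x
    rw [MonoidHom.mem_ker, ← QuotientGroup.eq_one_iff]
    exact ⟨fun h => congrArg Subtype.val h, fun h => Subtype.ext h⟩
  let f2 : G ⧸ lcs G 2 →* lcsZ G 0 := QuotientGroup.lift (lcs G 2) f (by
    intro x hx
    have : x ∈ lcs G 1 := Subgroup.lowerCentralSeries_antitone _ (Nat.le_succ 1) hx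
    rwa [← hker] at this)
  have hcomm := (MonoidHom.isMulCommutative_of_isCyclic_of_ker_le_center f2 (by
    intro q hq
    obtain ⟨x, rfl⟩ := QuotientGroup.mk'_surjective _ q
    refine lcsZ_central 1 ⟨x, ?_, rfl⟩
    have : x ∈ f.ker := hq
    rwa [hker] at this)).is_comm.comm
  have h12 : lcs G 1 ≤ lcs G 2 := by
    refine Subgroup.commutator_le.2 ?_
    intro a _ b _
    refine (QuotientGroup.eq_one_iff _).1 ?_
    have : QuotientGroup.mk' (lcs G 2) ⁅a, b⁆ = 1 := by
      rw [map_commutatorElement, commutatorElement_eq_one_iff_mul_comm]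
      exact hcomm _ _
    exact this
  have hall : ∀ i, lcs G 1 ≤ lcs G (i + 1) := by
    intro i
    induction i with
    | zero => exact le_rfl
    | succ i ih =>
      refine h12.trans ?_
      exact Subgroup.commutator_mono ih le_rfl
  have hbot : lcs G 1 = ⊥ := by
    rw [eq_bot_iff, ← Subgroup.lowerCentralSeries_nilpotencyClass (G := G)]
    exact (hall _).trans (Subgroup.lowerCentralSeries_antitone _ (Nat.le_succ _))
  refine isCyclic_of_injective f ?_
  rw [← MonoidHom.ker_eq_bot_iff, hker, hbot]

theorem stmt14 {G : Type*} [Group G] [Finite G] [Group.IsNilpotent G]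
    {p n l : ℕ} (hp : p.Prime) (hG : Nat.card G = p ^ n)
    (hl : 1 ≤ l) (hcl : Group.nilpotencyClass G = l) (hnc : ¬ IsCyclic G) :
    (eta G : ℝ) ≥ ((p : ℝ) - 1) * ((n : ℝ) / (l : ℝ) - 2) + p + 1 := by
  have : Fact p.Prime := ⟨hp⟩
  have hPG : IsPGroup p G := IsPGroup.of_card hG
  have hp1 : (0 : ℝ) ≤ (p : ℝ) - 1 := by
    have : (1 : ℝ) ≤ p := by exact_mod_cast hp.one_le
    linarith
  choose a ha using fun i => IsPGroup.iff_card.1 (hPG.to_subgroup (lcs G i))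
  choose m hm using fun i => IsPGroup.iff_card.1
    ((hPG.to_quotient (lcs G (i + 1))).to_subgroup (lcsZ G i))
  have hma : ∀ i, m i + a (i + 1) = a i := by
    intro i
    have := lcsZ_card (G := G) i
    rw [ha, ha, hm, ← pow_add] at this
    exact Nat.pow_right_injective hp.two_le this
  have ha0 : a 0 = n := by
    have h := ha 0
    rw [show lcs G 0 = ⊤ from rfl, Subgroup.card_top, hG] at h
    exact (Nat.pow_right_injective hp.two_le h).symm
  have hal : a l = 0 := by
    have h := ha l
    have hb : lcs G l = ⊥ := hcl ▸ Subgroup.lowerCentralSeries_nilpotencyClass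
    rw [hb, Subgroup.card_bot] at h
    by_contra hne
    have := Nat.one_lt_pow hne hp.one_lt
    omega
  have hsum : ∀ j, ∑ i ∈ Finset.range j, m i + a j = n := by
    intro j
    induction j with
    | zero => simpa using ha0
    | succ j ih => rw [Finset.sum_range_succ, add_assoc, hma, ih]
  have hstep : ∀ i, ¬ IsCyclic (lcsZ G i) →
      ((p : ℝ) - 1) * ((m i : ℝ) - 2) + p + 1 ≤ (eta G : ℝ) := by
    intro i hi
    have h1 := ab_real hp (lcsZ G i) (fun x y => Subtype.ext
      (Subgroup.mem_center_iff.1 (lcsZ_central i y.2) x.1)) (hm i) hi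
    have h2 := eta_center (lcsZ G i) (lcsZ_central i)
    have h3 := eta_quot (QuotientGroup.mk' (lcs G (i + 1))) (QuotientGroup.mk'_surjective _)
    have h4 : ({H : Subgroup (lcsZ G i) | IsMaximalCyclic H}.ncard : ℝ) ≤ (eta G : ℝ) := by
      exact_mod_cast h2.trans h3
    exact h1.trans h4
  have hm0 : ∀ i, IsCyclic (lcsZ G i) → m i ≤ m 0 := by
    intro i hi
    obtain ⟨z, hz⟩ := hi.exists_ofOrder_eq_natCard
    obtain ⟨x, hx, hxz⟩ := z.2
    have h1 := lcs_pow (G := G) (p ^ m 0) (by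
      intro x
      have h := pow_card_eq_one' (x := (⟨QuotientGroup.mk' (lcs G 1) x, x, Subgroup.mem_top x, rfl⟩ :
        lcsZ G 0))
      rw [hm] at h
      have h' := congrArg Subtype.val h
      exact (QuotientGroup.eq_one_iff _).1 h') i x hx
    have h2 : z ^ (p ^ m 0) = 1 := by
      refine Subtype.ext ?_
      rw [Subgroup.coe_pow, ← hxz, ← map_pow]
      exact (QuotientGroup.eq_one_iff _).2 h1
    have h3 := orderOf_dvd_of_pow_eq_one h2
    rw [hz, hm] at h3
    exact (Nat.pow_dvd_pow_iff_le_right hp.one_lt).1 h3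
  have hall : ∀ i, ((p : ℝ) - 1) * ((m i : ℝ) - 2) + p + 1 ≤ (eta G : ℝ) := by
    intro i
    by_cases hi : IsCyclic (lcsZ G i)
    · have h1 := hstep 0 (fun h => hnc (cyclic_of_lcsZ h))
      have h2 : (m i : ℝ) ≤ m 0 := by exact_mod_cast hm0 i hi
      have := mul_le_mul_of_nonneg_left (sub_le_sub_right h2 2) hp1
      linarith
    · exact hstep i hi
  obtain ⟨i, hi⟩ : ∃ i, n ≤ l * m i := by
    by_contra hcon
    push Not at hcon
    have h1 := hsum l
    rw [hal, add_zero] at h1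
    have h2 : ∑ i ∈ Finset.range l, l * m i < ∑ i ∈ Finset.range l, n :=
      Finset.sum_lt_sum_of_nonempty (by simpa using by omega) fun i _ => hcon i
    rw [← Finset.mul_sum, h1] at h2
    simp at h2
  have hl0 : (0 : ℝ) < l := by exact_mod_cast hl
  have h5 : (n : ℝ) / l ≤ m i := by
    rw [div_le_iff₀ hl0, mul_comm]
    exact_mod_cast hi
  have := mul_le_mul_of_nonneg_left (sub_le_sub_right h5 2) hp1
  have := hall i
  linarith
end
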